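/- Suppose F : X → ℝ is L_W-smooth and lower-bounded, i.e., F(W) ≥ F̃ for all W ∈ X; the FLT iterates satisfy W^t − W^{t−1} = −η Ā ∇F(W^{t−1}) for all t ≥ 1 with step size η > 0; the per-step gradient-deviation bound ‖(I_M − Ā)·∇F(W^{t−1})‖ ≤ L_W · a · ‖W^t − W^{t−1}‖ holds for all t ≥ 1, where a is the operator norm of V ↦ (I_M − Ā)V on X; and c := 1/(2η) − L_W/2 − (η/2)·L_W²·a² > 0. Then for every T ≥ 1, Σ_{t=1}^{T} ‖W^t − W^{t−1}‖² ≤ (F(W^0) − F̃)/c, and consequently the averaged optimality gap satisfies (1/T)·Σ_{t=1}^{T} ‖W^t − W^{t−1}‖² ≤ (F(W^0) − F̃)/(c·T), i.e., FLT converges at rate O(1/T) in the number of communication rounds. -/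

import Mathlib

open scoped RealInnerProductSpace

/-- Left multiplication by an `M × M` matrix `A` on the space of `M × d` real matrices,
realized as the Euclidean space `EuclideanSpace ℝ (Fin M × Fin d)` (with the Frobenius
inner product), via the Kronecker product `A ⊗ I_d`. -/
noncomputable def matLeftMul (M d : ℕ) (A : Matrix (Fin M) (Fin M) ℝ) :
    EuclideanSpace ℝ (Fin M × Fin d) →L[ℝ] EuclideanSpace ℝ (Fin M × Fin d) :=
  LinearMap.toContinuousLinearMap
    (Matrix.toEuclideanLin (Matrix.kroneckerMap (· * ·) A (1 : Matrix (Fin d) (Fin d) ℝ)))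

/-!
A step `d = -η p` along an estimate `p` of the gradient `g` of an `L`-smooth function `F` satisfies
`⟪g, d⟫ = ⟪g - p, d⟫ - ‖d‖² / η`. If `‖g - p‖ ≤ δ ‖d‖`, the descent lemma therefore makes `F`
decrease by at least `(1 / η - L / 2 - δ) ‖d‖²`, and these decrements telescope.
For FLT, `p = Ā g` and `δ = L_W a`; by AM-GM, `δ ≤ 1 / (2η) + (η / 2) δ²`, so that the constant `c`
of the theorem is at most `1 / η - L_W / 2 - δ`.
-/

section MatLeftMul

open scoped Kronecker

variable {M d : ℕ}

theorem matLeftMul_one : matLeftMul M d 1 = ContinuousLinearMap.id ℝ _ := by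
  ext1 V
  change Matrix.toEuclideanLin ((1 : Matrix (Fin M) (Fin M) ℝ) ⊗ₖ 1) V = V
  rw [Matrix.one_kronecker_one, Matrix.toEuclideanLin, Matrix.toLpLin_one, LinearMap.id_apply]

theorem matLeftMul_sub (A B : Matrix (Fin M) (Fin M) ℝ) :
    matLeftMul M d (A - B) = matLeftMul M d A - matLeftMul M d B := by
  have kronecker_sub : (A - B) ⊗ₖ (1 : Matrix (Fin d) (Fin d) ℝ) = A ⊗ₖ 1 - B ⊗ₖ 1 :=
    Matrix.ext fun _ _ ↦ sub_mul _ _ _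
  ext1 V
  change Matrix.toEuclideanLin ((A - B) ⊗ₖ 1) V =
    Matrix.toEuclideanLin (A ⊗ₖ 1) V - Matrix.toEuclideanLin (B ⊗ₖ 1) V
  rw [kronecker_sub, map_sub, LinearMap.sub_apply]

theorem matLeftMul_one_sub_apply (A : Matrix (Fin M) (Fin M) ℝ)
    (V : EuclideanSpace ℝ (Fin M × Fin d)) :
    matLeftMul M d (1 - A) V = V - matLeftMul M d A V := by
  rw [matLeftMul_sub, matLeftMul_one, sub_apply, ContinuousLinearMap.id_apply]

end MatLeftMul

theorem one_div_two_mul_sub_half_mul_sq_le {η : ℝ} (hη : 0 < η) (δ : ℝ) :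
    1 / (2 * η) - η / 2 * δ ^ 2 ≤ 1 / η - δ := by
  have gap_eq : 1 / η - δ - (1 / (2 * η) - η / 2 * δ ^ 2) = (1 - η * δ) ^ 2 / (2 * η) := by
    field_simp
    ring
  rw [← sub_nonneg, gap_eq]
  positivity

theorem sum_Icc_one_le_div_of_mul_le_sub {K : Type*} [Field K] [LinearOrder K]
    [IsStrictOrderedRing K] {u f : ℕ → K} {c m : K} (hc : 0 < c)
    (hdecr : ∀ t, 1 ≤ t → c * u t ≤ f (t - 1) - f t) {T : ℕ} (hm : m ≤ f T) :
    ∑ t ∈ Finset.Icc 1 T, u t ≤ (f 0 - m) / c := by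
  have telescoped (n : ℕ) : (∑ t ∈ Finset.Icc 1 n, u t) * c ≤ f 0 - f n := by
    induction n with
    | zero => simp
    | succ n ih =>
      have last := hdecr (n + 1) n.succ_pos
      rw [Nat.add_sub_cancel] at last
      rw [Finset.sum_Icc_succ_top n.succ_pos, add_mul]
      linarith
  rw [le_div_iff₀ hc]
  exact (telescoped T).trans (sub_le_sub_left hm _)

section Descent

variable {E : Type*} [NormedAddCommGroup E] [InnerProductSpace ℝ E]

theorem real_inner_le_of_norm_sub_le_of_eq_neg_smul {g p d : E} {η δ : ℝ} (hη : η ≠ 0)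
    (hd : d = -(η • p)) (hδ : ‖g - p‖ ≤ δ * ‖d‖) :
    ⟪g, d⟫ ≤ (δ - 1 / η) * ‖d‖ ^ 2 := by
  have estimate_eq : p = -(η⁻¹ • d) := by
    rw [hd, smul_neg, neg_neg, inv_smul_smul₀ hη]
  have inner_estimate : ⟪p, d⟫ = -(1 / η) * ‖d‖ ^ 2 := by
    rw [estimate_eq, inner_neg_left, real_inner_smul_left, real_inner_self_eq_norm_sq, one_div,
      neg_mul]
  calc ⟪g, d⟫ = ⟪g - p, d⟫ + ⟪p, d⟫ := by rw [← inner_add_left, sub_add_cancel]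
    _ ≤ ‖g - p‖ * ‖d‖ + ⟪p, d⟫ := by gcongr; exact real_inner_le_norm _ _
    _ ≤ δ * ‖d‖ * ‖d‖ + ⟪p, d⟫ := by gcongr
    _ = (δ - 1 / η) * ‖d‖ ^ 2 := by rw [inner_estimate]; ring

variable [CompleteSpace E] {F : E → ℝ}

theorem hasDerivAt_comp_add_smul_of_hasGradientAt {g x d : E} {t : ℝ}
    (hF : HasGradientAt F g (x + t • d)) :
    HasDerivAt (fun s : ℝ ↦ F (x + s • d)) ⟪g, d⟫ t := by
  have line_deriv : HasDerivAt (fun s : ℝ ↦ x + s • d) d t := by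
    simpa using ((hasDerivAt_id t).smul_const d).const_add x
  simpa [Function.comp_def] using hF.hasFDerivAt.comp_hasDerivAt t line_deriv

variable {gradF : E → E} {L : ℝ}

theorem le_add_inner_add_sq_norm_of_gradient_lipschitz (hF : ∀ x, HasGradientAt F (gradF x) x)
    (hL : ∀ x y, ‖gradF x - gradF y‖ ≤ L * ‖x - y‖) (x d : E) :
    F (x + d) ≤ F x + ⟪gradF x, d⟫ + L / 2 * ‖d‖ ^ 2 := by
  have line_deriv (t : ℝ) := hasDerivAt_comp_add_smul_of_hasGradientAt (hF (x + t • d))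
  have model_deriv (t : ℝ) :
      HasDerivAt (fun s : ℝ ↦ F x + s * ⟪gradF x, d⟫ + L / 2 * ‖d‖ ^ 2 * s ^ 2)
        (⟪gradF x, d⟫ + t * (L * ‖d‖ ^ 2)) t := by
    refine ((((hasDerivAt_id t).mul_const _).const_add (F x)).add
      (((hasDerivAt_id t).pow 2).const_mul (L / 2 * ‖d‖ ^ 2))).congr_deriv ?_
    simp only [id_eq]
    ring
  have deriv_le (t : ℝ) (ht : 0 ≤ t) :
      ⟪gradF (x + t • d), d⟫ ≤ ⟪gradF x, d⟫ + t * (L * ‖d‖ ^ 2) := by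
    rw [← sub_le_iff_le_add', ← inner_sub_left]
    calc ⟪gradF (x + t • d) - gradF x, d⟫
        ≤ ‖gradF (x + t • d) - gradF x‖ * ‖d‖ := real_inner_le_norm _ _
      _ ≤ L * ‖x + t • d - x‖ * ‖d‖ := by gcongr; exact hL _ _
      _ = t * (L * ‖d‖ ^ 2) := by
        rw [add_sub_cancel_left, norm_smul, Real.norm_of_nonneg ht]
        ring
  have le_model_at_one := image_le_of_deriv_right_le_deriv_boundary
    (fun t _ ↦ (line_deriv t).continuousAt.continuousWithinAt)
    (fun t _ ↦ (line_deriv t).hasDerivWithinAt) (by simp)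
    (fun t _ ↦ (model_deriv t).continuousAt.continuousWithinAt)
    (fun t _ ↦ (model_deriv t).hasDerivWithinAt) (fun t ht ↦ deriv_le t ht.1)
    (Set.right_mem_Icc.2 (zero_le_one' ℝ))
  simpa using le_model_at_one

theorem mul_sq_norm_sub_le_sub_of_inexact_gradient_step
    (hF : ∀ x, HasGradientAt F (gradF x) x) (hL : ∀ x y, ‖gradF x - gradF y‖ ≤ L * ‖x - y‖)
    {x y p : E} {η δ : ℝ} (hη : η ≠ 0) (hstep : y - x = -(η • p))
    (hδ : ‖gradF x - p‖ ≤ δ * ‖y - x‖) :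
    (1 / η - L / 2 - δ) * ‖y - x‖ ^ 2 ≤ F x - F y := by
  have descent := le_add_inner_add_sq_norm_of_gradient_lipschitz hF hL x (y - x)
  rw [add_sub_cancel] at descent
  have inner_le := real_inner_le_of_norm_sub_le_of_eq_neg_smul hη hstep hδ
  linarith

theorem flt_rate_general (hF : ∀ x, HasGradientAt F (gradF x) x)
    (hL : ∀ x y, ‖gradF x - gradF y‖ ≤ L * ‖x - y‖)
    {W p : ℕ → E} {Fmin : ℝ} (hlb : ∀ t, Fmin ≤ F (W t)) {η δ c : ℝ} (hη : η ≠ 0)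
    (hupd : ∀ t, 1 ≤ t → W t - W (t - 1) = -(η • p t))
    (hdev : ∀ t, 1 ≤ t → ‖gradF (W (t - 1)) - p t‖ ≤ δ * ‖W t - W (t - 1)‖)
    (hc : c ≤ 1 / η - L / 2 - δ) (hcpos : 0 < c) (T : ℕ) (hT : 1 ≤ T) :
    ∑ t ∈ Finset.Icc 1 T, ‖W t - W (t - 1)‖ ^ 2 ≤ (F (W 0) - Fmin) / c ∧
      1 / (T : ℝ) * ∑ t ∈ Finset.Icc 1 T, ‖W t - W (t - 1)‖ ^ 2 ≤
        (F (W 0) - Fmin) / (c * T) := by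
  have decrease (t : ℕ) (ht : 1 ≤ t) :
      c * ‖W t - W (t - 1)‖ ^ 2 ≤ F (W (t - 1)) - F (W t) :=
    (mul_le_mul_of_nonneg_right hc (sq_nonneg _)).trans
      (mul_sq_norm_sub_le_sub_of_inexact_gradient_step hF hL hη (hupd t ht) (hdev t ht))
  have sum_le : ∑ t ∈ Finset.Icc 1 T, ‖W t - W (t - 1)‖ ^ 2 ≤ (F (W 0) - Fmin) / c :=
    sum_Icc_one_le_div_of_mul_le_sub (f := fun t ↦ F (W t)) hcpos decrease (hlb T)
  have T_pos : (0 : ℝ) < T := Nat.cast_pos.2 hT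
  refine ⟨sum_le, ?_⟩
  rw [one_div_mul_eq_div, ← div_div]
  exact (div_le_div_iff_of_pos_right T_pos).2 sum_le

end Descent

/-- FLT converges at rate `O(1/T)` in the number of communication rounds, for a
lower-bounded `L_W`-smooth objective. -/
theorem flt_rate (M d : ℕ) (hM : 1 ≤ M) (hd : 1 ≤ d)
    (Abar : Matrix (Fin M) (Fin M) ℝ)
    (F : EuclideanSpace ℝ (Fin M × Fin d) → ℝ)
    (gradF : EuclideanSpace ℝ (Fin M × Fin d) → EuclideanSpace ℝ (Fin M × Fin d))
    (hF : ∀ V, HasGradientAt F (gradF V) V)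
    (LW : ℝ)
    (hsmooth : ∀ U V : EuclideanSpace ℝ (Fin M × Fin d),
      ‖gradF U - gradF V‖ ≤ LW * ‖U - V‖)
    (Ftilde : ℝ) (hlb : ∀ V, Ftilde ≤ F V)
    (η : ℝ) (hη : 0 < η)
    (W : ℕ → EuclideanSpace ℝ (Fin M × Fin d))
    (hupd : ∀ t : ℕ, 1 ≤ t →
      W t - W (t - 1) = -(η • matLeftMul M d Abar (gradF (W (t - 1)))))
    (a : ℝ) (ha : a = ‖matLeftMul M d ((1 : Matrix (Fin M) (Fin M) ℝ) - Abar)‖)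
    (hdev : ∀ t : ℕ, 1 ≤ t →
      ‖matLeftMul M d ((1 : Matrix (Fin M) (Fin M) ℝ) - Abar) (gradF (W (t - 1)))‖ ≤
        LW * a * ‖W t - W (t - 1)‖)
    (c : ℝ) (hc : c = 1 / (2 * η) - LW / 2 - (η / 2) * LW ^ 2 * a ^ 2)
    (hcpos : 0 < c) :
    ∀ T : ℕ, 1 ≤ T →
      (∑ t ∈ Finset.Icc 1 T, ‖W t - W (t - 1)‖ ^ 2) ≤ (F (W 0) - Ftilde) / c ∧
        (1 / (T : ℝ)) * (∑ t ∈ Finset.Icc 1 T, ‖W t - W (t - 1)‖ ^ 2) ≤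
          (F (W 0) - Ftilde) / (c * (T : ℝ)) := by
  have c_le : c ≤ 1 / η - LW / 2 - LW * a := by
    linarith [one_div_two_mul_sub_half_mul_sq_le hη (LW * a)]
  exact flt_rate_general hF hsmooth (fun t ↦ hlb (W t)) hη.ne' hupd
    (fun t ht ↦ matLeftMul_one_sub_apply Abar (gradF (W (t - 1))) ▸ hdev t ht) c_le hcpos
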